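/- arXiv:math/0205140 — 2 statements merged into one kernel-verified Lean document; each statement's English description precedes it below -/
import Mathlib

section
/- Let X₁,…,X_{N₁} and Y₁,…,Y_{N₂} be points in [0,1]^d. For K ≥ 1, subdivide [0,1]^d dyadically K times into 2^{Kd} congruent subcubes Q_{p₁…p_K} of edge length 2^{−K}, where for 1 ≤ k ≤ K, Q_{p₁…p_k} denotes the cube of edge length 2^{−k} at level k of the dyadic subdivision. Let n_{1,p₁…p_k} and n_{2,p₁…p_k} denote the numbers of X-points and Y-points in Q_{p₁…p_k}, and let L_{p₁…p_K} be the length of an optimal partial bipartite matching of the X-points and Y-points in Q_{p₁…p_K}. Then L_MBM(X₁,…,X_{N₁}; Y₁,…,Y_{N₂}) ≤ Σ_{p₁…p_K} L_{p₁…p_K} + Σ_{k=1}^{K} (√d / 2^k) Σ_{p₁…p_k} |n_{1,p₁…p_k} − n_{2,p₁…p_k}|. -/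
open MeasureTheory ProbabilityTheory Filter

noncomputable section

/-- The unit cube `[0,1]^d` in Euclidean space `ℝ^d`. -/
def unitCube (d : ℕ) : Set (EuclideanSpace ℝ (Fin d)) :=
  {x | ∀ i, x i ∈ Set.Icc (0 : ℝ) 1}

/-- The uniform probability measure on the unit cube `[0,1]^d`
(the cube has Lebesgue measure one, so the restriction of Lebesgue measure
to the cube is the uniform probability measure on it). -/
def unifCube (d : ℕ) : Measure (EuclideanSpace ℝ (Fin d)) :=
  volume.restrict (unitCube d)

/-- `LMBMon X Y A B` is the minimum total Euclidean length of a partial bipartite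
matching pairing `min A.card B.card` of the points `X j, j ∈ A` with as many of the
points `Y j, j ∈ B`, each pair consisting of one `X`-point and one `Y`-point. -/
def LMBMon {d N₁ N₂ : ℕ} (X : Fin N₁ → EuclideanSpace ℝ (Fin d))
    (Y : Fin N₂ → EuclideanSpace ℝ (Fin d)) (A : Finset (Fin N₁)) (B : Finset (Fin N₂)) : ℝ :=
  sInf { s | ∃ (σ : Fin (min A.card B.card) ↪ Fin N₁) (τ : Fin (min A.card B.card) ↪ Fin N₂),
    (∀ i, σ i ∈ A) ∧ (∀ i, τ i ∈ B) ∧ s = ∑ i, dist (X (σ i)) (Y (τ i)) }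

/-- `LMBM X Y` : the minimum total Euclidean length of a bipartite matching between the
points of `X` and the points of `Y`; if the two families have different cardinalities
`N₁ ≠ N₂`, it is the minimum length of a partial matching pairing `min N₁ N₂` points of
each family, leaving `|N₁ - N₂|` points unmatched. -/
def LMBM {d N₁ N₂ : ℕ} (X : Fin N₁ → EuclideanSpace ℝ (Fin d))
    (Y : Fin N₂ → EuclideanSpace ℝ (Fin d)) : ℝ :=
  LMBMon X Y Finset.univ Finset.univ

/-- `MP d lam`: the expected length of a minimum bipartite matching in the Poissonized
model on `[0,1]^d` with intensity `lam`: the numbers `n₁, n₂` of points of the two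
families are independent Poisson(lam) variables and the points are i.i.d. uniform
on the cube. -/
def MP (d : ℕ) (lam : ℝ) : ℝ :=
  ∑' n₁ : ℕ, ∑' n₂ : ℕ,
    (Real.exp (-lam) * lam ^ n₁ / n₁.factorial) *
      ((Real.exp (-lam) * lam ^ n₂ / n₂.factorial) *
        ∫ p : (Fin n₁ → EuclideanSpace ℝ (Fin d)) × (Fin n₂ → EuclideanSpace ℝ (Fin d)),
          LMBM p.1 p.2 ∂ ((Measure.pi fun _ => unifCube d).prod (Measure.pi fun _ => unifCube d)))

end
/-- The label of the dyadic cube of edge length `2⁻ᵏ` of the `k`-th dyadic subdivision of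
`[0,1]^d` containing the point `x`: in each coordinate `i`, the cube occupies the interval
`[q i / 2^k, (q i + 1) / 2^k)` (closed at the right end when `q i = 2^k - 1`). -/
noncomputable def dyadicLabel (d k : ℕ) (x : EuclideanSpace ℝ (Fin d)) (i : Fin d) : ℕ :=
  min ⌊(2 : ℝ) ^ k * x i⌋₊ (2 ^ k - 1)

/-!
Two points in a common cell of the level-`k` subdivision are at distance at most `√d / 2 ^ k`.
Inside such a cell, glue optimal matchings of its level-`(k + 1)` subcells. If these contain
`a q` and `b q` points, the glued matching falls short of a maximum one by
`min (∑ a q) (∑ b q) - ∑ min (a q) (b q) ≤ (∑ |a q - b q|) / 2` pairs. A partial matching between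
two sets can always be completed to a maximum one, and each added pair costs at most `√d / 2 ^ k`.
Telescoping over `k` gives the bound.
-/

section PartialMatching

variable {ι κ γ : Type*}

/-- A partial matching between finite sets `A` and `B`, encoded as the set `P` of its pairs. -/
structure IsPartialMatching (A : Finset ι) (B : Finset κ) (P : Finset (ι × κ)) : Prop where
  subset_product : P ⊆ A ×ˢ B
  injOn_fst : Set.InjOn Prod.fst (P : Set (ι × κ))
  injOn_snd : Set.InjOn Prod.snd (P : Set (ι × κ))

/-- A partial matching with as many pairs as possible. Every point of `A` may be paired with every
point of `B`, so the largest number of pairs is `min #A #B`. -/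
structure IsMaximumMatching (A : Finset ι) (B : Finset κ) (P : Finset (ι × κ)) : Prop
    extends IsPartialMatching A B P where
  card_eq : P.card = min A.card B.card

theorem isPartialMatching_empty (A : Finset ι) (B : Finset κ) : IsPartialMatching A B ∅ :=
  ⟨by simp, by simp, by simp⟩

theorem finite_setOf_isPartialMatching (A : Finset ι) (B : Finset κ) :
    {P | IsPartialMatching A B P}.Finite :=
  (A ×ˢ B).powerset.finite_toSet.subset fun _ hP ↦
    Finset.mem_coe.2 (Finset.mem_powerset.2 hP.subset_product)

namespace IsPartialMatching

variable {A : Finset ι} {B : Finset κ} {P : Finset (ι × κ)}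

theorem fst_mem (hP : IsPartialMatching A B P) {p : ι × κ} (hp : p ∈ P) : p.1 ∈ A :=
  (Finset.mem_product.1 (hP.subset_product hp)).1

theorem snd_mem (hP : IsPartialMatching A B P) {p : ι × κ} (hp : p ∈ P) : p.2 ∈ B :=
  (Finset.mem_product.1 (hP.subset_product hp)).2

theorem card_le_min (hP : IsPartialMatching A B P) : P.card ≤ min A.card B.card :=
  le_min (Finset.card_le_card_of_injOn Prod.fst (fun _ ↦ hP.fst_mem) hP.injOn_fst)
    (Finset.card_le_card_of_injOn Prod.snd (fun _ ↦ hP.snd_mem) hP.injOn_snd)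

theorem insert [DecidableEq ι] [DecidableEq κ] (hP : IsPartialMatching A B P) {a : ι} {b : κ}
    (ha : a ∈ A) (hb : b ∈ B) (haP : a ∉ P.image Prod.fst) (hbP : b ∉ P.image Prod.snd) :
    IsPartialMatching A B (insert (a, b) P) := by
  have hab : (a, b) ∉ (P : Set (ι × κ)) := fun h ↦ haP (Finset.mem_image_of_mem Prod.fst h)
  refine ⟨Finset.insert_subset (Finset.mk_mem_product ha hb) hP.subset_product, ?_, ?_⟩
  · rw [Finset.coe_insert, Set.injOn_insert hab, ← Finset.coe_image]
    exact ⟨hP.injOn_fst, haP⟩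
  · rw [Finset.coe_insert, Set.injOn_insert hab, ← Finset.coe_image]
    exact ⟨hP.injOn_snd, hbP⟩

theorem isMaximumMatching_of_maximal (hP : Maximal (IsPartialMatching A B) P) :
    IsMaximumMatching A B P := by
  classical
  refine ⟨hP.prop, hP.prop.card_le_min.antisymm (not_lt.1 fun hlt ↦ ?_)⟩
  obtain ⟨hltA, hltB⟩ := lt_min_iff.1 hlt
  obtain ⟨a, ha, haP⟩ := Finset.exists_mem_notMem_of_card_lt_card
    ((Finset.card_image_le (s := P) (f := Prod.fst)).trans_lt hltA)
  obtain ⟨b, hb, hbP⟩ := Finset.exists_mem_notMem_of_card_lt_card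
    ((Finset.card_image_le (s := P) (f := Prod.snd)).trans_lt hltB)
  have hmem : (a, b) ∈ P := hP.le_of_ge (hP.prop.insert ha hb haP hbP)
    (Finset.subset_insert _ _) (Finset.mem_insert_self _ _)
  exact haP (Finset.mem_image_of_mem Prod.fst hmem)

theorem exists_isMaximumMatching_superset (hP : IsPartialMatching A B P) :
    ∃ M, P ⊆ M ∧ IsMaximumMatching A B M := by
  obtain ⟨M, hPM, hM⟩ := (finite_setOf_isPartialMatching A B).exists_le_maximal hP
  exact ⟨M, hPM, isMaximumMatching_of_maximal hM⟩

end IsPartialMatching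

theorem exists_isMaximumMatching (A : Finset ι) (B : Finset κ) : ∃ M, IsMaximumMatching A B M :=
  (isPartialMatching_empty A B).exists_isMaximumMatching_superset.imp fun _ ↦ And.right

theorem injOn_biUnion_of_mapsTo_pairwiseDisjoint [DecidableEq ι] {T : Finset γ}
    {P : γ → Finset ι} {A : γ → Finset κ} {f : ι → κ} (hA : (T : Set γ).PairwiseDisjoint A)
    (hmaps : ∀ q ∈ T, Set.MapsTo f (P q) (A q)) (hinj : ∀ q ∈ T, Set.InjOn f (P q)) :
    Set.InjOn f (T.biUnion P : Set ι) := by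
  intro x hx y hy hxy
  obtain ⟨q, hq, hxq⟩ := Finset.mem_biUnion.1 hx
  obtain ⟨r, hr, hyr⟩ := Finset.mem_biUnion.1 hy
  obtain rfl : q = r :=
    hA.elim_finset hq hr (f x) (hmaps q hq hxq) (hxy ▸ hmaps r hr hyr)
  exact hinj q hq hxq hyr hxy

variable {T : Finset γ} {A : γ → Finset ι} {B : γ → Finset κ} {P : γ → Finset (ι × κ)}

theorem IsPartialMatching.biUnion [DecidableEq ι] [DecidableEq κ]
    (hA : (T : Set γ).PairwiseDisjoint A) (hB : (T : Set γ).PairwiseDisjoint B)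
    (hP : ∀ q ∈ T, IsPartialMatching (A q) (B q) (P q)) :
    IsPartialMatching (T.biUnion A) (T.biUnion B) (T.biUnion P) where
  subset_product := Finset.biUnion_subset.2 fun q hq ↦ (hP q hq).subset_product.trans
    (Finset.product_subset_product (Finset.subset_biUnion_of_mem A hq)
      (Finset.subset_biUnion_of_mem B hq))
  injOn_fst := injOn_biUnion_of_mapsTo_pairwiseDisjoint hA
    (fun q hq _ ↦ (hP q hq).fst_mem) fun q hq ↦ (hP q hq).injOn_fst
  injOn_snd := injOn_biUnion_of_mapsTo_pairwiseDisjoint hB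
    (fun q hq _ ↦ (hP q hq).snd_mem) fun q hq ↦ (hP q hq).injOn_snd

theorem pairwiseDisjoint_of_isPartialMatching (hA : (T : Set γ).PairwiseDisjoint A)
    (hP : ∀ q ∈ T, IsPartialMatching (A q) (B q) (P q)) : (T : Set γ).PairwiseDisjoint P :=
  fun q hq r hr hqr ↦ Finset.disjoint_left.2 fun _ hpq hpr ↦
    Finset.disjoint_left.1 (hA hq hr hqr) ((hP q hq).fst_mem hpq) ((hP r hr).fst_mem hpr)

end PartialMatching

section MinMatchingCost

variable {ι κ γ : Type*}

/-- The minimum total cost of a maximum matching between `A` and `B`, when the pair `p` costs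
`c p`. The infimum is over a finite nonempty set, hence attained. -/
noncomputable def minMatchingCost (c : ι × κ → ℝ) (A : Finset ι) (B : Finset κ) : ℝ :=
  sInf ((fun P ↦ ∑ p ∈ P, c p) '' {P | IsMaximumMatching A B P})

theorem finite_image_setOf_isMaximumMatching (c : ι × κ → ℝ) (A : Finset ι) (B : Finset κ) :
    ((fun P ↦ ∑ p ∈ P, c p) '' {P | IsMaximumMatching A B P}).Finite :=
  ((finite_setOf_isPartialMatching A B).subset fun _ hP ↦ hP.toIsPartialMatching).image _

theorem minMatchingCost_le_sum (c : ι × κ → ℝ) {A : Finset ι} {B : Finset κ}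
    {P : Finset (ι × κ)} (hP : IsMaximumMatching A B P) :
    minMatchingCost c A B ≤ ∑ p ∈ P, c p :=
  csInf_le (finite_image_setOf_isMaximumMatching c A B).bddBelow (Set.mem_image_of_mem _ hP)

theorem exists_sum_eq_minMatchingCost (c : ι × κ → ℝ) (A : Finset ι) (B : Finset κ) :
    ∃ P, IsMaximumMatching A B P ∧ ∑ p ∈ P, c p = minMatchingCost c A B :=
  Set.Nonempty.csInf_mem (Set.Nonempty.image _ (exists_isMaximumMatching A B))
    (finite_image_setOf_isMaximumMatching c A B)

theorem minMatchingCost_le_sum_add {c : ι × κ → ℝ} {A : Finset ι} {B : Finset κ} {D : ℝ}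
    (hD : ∀ p ∈ A ×ˢ B, c p ≤ D) {P : Finset (ι × κ)} (hP : IsPartialMatching A B P) :
    minMatchingCost c A B ≤
      ∑ p ∈ P, c p + (min (A.card : ℝ) B.card - P.card) * D := by
  classical
  obtain ⟨M, hPM, hM⟩ := hP.exists_isMaximumMatching_superset
  have hcard : ((M \ P).card : ℝ) = min (A.card : ℝ) B.card - P.card := by
    rw [Finset.cast_card_sdiff hPM, hM.card_eq, Nat.cast_min]
  have hadded : ∑ p ∈ M \ P, c p ≤ (M \ P).card • D :=
    Finset.sum_le_card_nsmul _ _ _ fun p hp ↦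
      hD p (hM.subset_product (Finset.sdiff_subset hp))
  calc minMatchingCost c A B ≤ ∑ p ∈ M, c p := minMatchingCost_le_sum c hM
    _ = ∑ p ∈ P, c p + ∑ p ∈ M \ P, c p := by rw [add_comm, Finset.sum_sdiff hPM]
    _ ≤ ∑ p ∈ P, c p + (min (A.card : ℝ) B.card - P.card) * D := by
      rw [← hcard, ← nsmul_eq_mul]
      gcongr

theorem min_sum_sub_sum_min_le (T : Finset γ) (a b : γ → ℝ) :
    min (∑ q ∈ T, a q) (∑ q ∈ T, b q) - ∑ q ∈ T, min (a q) (b q) ≤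
      (∑ q ∈ T, |a q - b q|) / 2 := by
  have hmin (q : γ) : min (a q) (b q) = (a q + b q - |a q - b q|) / 2 := by
    linarith [min_add_max (a q) (b q), max_sub_min_eq_abs' (a q) (b q)]
  simp only [hmin, ← Finset.sum_div, Finset.sum_sub_distrib, Finset.sum_add_distrib]
  linarith [min_le_left (∑ q ∈ T, a q) (∑ q ∈ T, b q),
    min_le_right (∑ q ∈ T, a q) (∑ q ∈ T, b q)]

theorem minMatchingCost_biUnion_le [DecidableEq ι] [DecidableEq κ] {c : ι × κ → ℝ}
    {T : Finset γ} {A : γ → Finset ι} {B : γ → Finset κ} {D : ℝ} (hD₀ : 0 ≤ D)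
    (hD : ∀ p ∈ T.biUnion A ×ˢ T.biUnion B, c p ≤ D)
    (hA : (T : Set γ).PairwiseDisjoint A) (hB : (T : Set γ).PairwiseDisjoint B) :
    minMatchingCost c (T.biUnion A) (T.biUnion B) ≤
      ∑ q ∈ T, minMatchingCost c (A q) (B q) +
        D / 2 * ∑ q ∈ T, |((A q).card : ℝ) - (B q).card| := by
  choose P hP hPc using fun q ↦ exists_sum_eq_minMatchingCost c (A q) (B q)
  have hPpart : ∀ q ∈ T, IsPartialMatching (A q) (B q) (P q) :=
    fun q _ ↦ (hP q).toIsPartialMatching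
  have hPdisj := pairwiseDisjoint_of_isPartialMatching hA hPpart
  have hglue := minMatchingCost_le_sum_add hD (IsPartialMatching.biUnion hA hB hPpart)
  simp only [Finset.sum_biUnion hPdisj, Finset.card_biUnion hPdisj, Finset.card_biUnion hA,
    Finset.card_biUnion hB, Nat.cast_sum, (hP _).card_eq, Nat.cast_min, hPc] at hglue
  have hmissing := mul_le_mul_of_nonneg_right
    (min_sum_sub_sum_min_le T (fun q ↦ ((A q).card : ℝ)) fun q ↦ ((B q).card : ℝ)) hD₀
  linarith

end MinMatchingCost

section LabelledCells

variable {ι κ Q R : Type*} [Fintype ι] [Fintype κ]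

/-- The total cost of matching optimally within each cell, when the labels `f` and `g` say which
cell the points indexed by `ι` and `κ` lie in. -/
noncomputable def cellwiseMatchingCost [Fintype Q] [DecidableEq Q] (c : ι × κ → ℝ) (f : ι → Q)
    (g : κ → Q) : ℝ :=
  ∑ q, minMatchingCost c {i | f i = q} {j | g j = q}

/-- The sum over all cells of the difference between the numbers of points of the two families in
the cell, for points labelled by `f` and `g`. -/
def cellDiscrepancy [Fintype Q] [DecidableEq Q] (f : ι → Q) (g : κ → Q) : ℝ :=
  ∑ q, |(({i | f i = q} : Finset ι).card : ℝ) - ({j | g j = q} : Finset κ).card|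

theorem cellwiseMatchingCost_of_unique [Fintype Q] [Unique Q] [DecidableEq Q] (c : ι × κ → ℝ)
    (f : ι → Q) (g : κ → Q) :
    cellwiseMatchingCost c f g = minMatchingCost c Finset.univ Finset.univ := by
  rw [cellwiseMatchingCost, Fintype.sum_unique]
  congr 1 <;> exact Finset.filter_true_of_mem fun _ _ ↦ Subsingleton.elim _ _

theorem filter_comp_eq_biUnion_filter [Fintype R] [DecidableEq Q] [DecidableEq R] [DecidableEq ι]
    (π : R → Q) (f : ι → R) (q : Q) :
    ({i | π (f i) = q} : Finset ι) =
      ({r | π r = q} : Finset R).biUnion fun r ↦ {i | f i = r} := by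
  ext i
  simp

theorem cellwiseMatchingCost_comp_le [Fintype Q] [Fintype R] [DecidableEq Q] [DecidableEq R]
    {c : ι × κ → ℝ} {f : ι → R} {g : κ → R} {π : R → Q} {D : ℝ} (hD₀ : 0 ≤ D)
    (hD : ∀ i j, π (f i) = π (g j) → c (i, j) ≤ D) :
    cellwiseMatchingCost c (π ∘ f) (π ∘ g) ≤
      cellwiseMatchingCost c f g + D / 2 * cellDiscrepancy f g := by
  classical
  have hcell (q : Q) : minMatchingCost c {i | π (f i) = q} {j | π (g j) = q} ≤
      ∑ r with π r = q, minMatchingCost c {i | f i = r} {j | g j = r} +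
        D / 2 * ∑ r with π r = q, |(({i | f i = r} : Finset ι).card : ℝ) -
          ({j | g j = r} : Finset κ).card| := by
    have hDq : ∀ p ∈ ({i | π (f i) = q} : Finset ι) ×ˢ
        ({j | π (g j) = q} : Finset κ), c p ≤ D := by
      simp only [Finset.mem_product, Finset.mem_filter_univ]
      exact fun p hp ↦ hD p.1 p.2 (hp.1.trans hp.2.symm)
    rw [filter_comp_eq_biUnion_filter π f q, filter_comp_eq_biUnion_filter π g q] at hDq ⊢
    exact minMatchingCost_biUnion_le hD₀ hDq (Set.pairwiseDisjoint_filter _ _ _)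
      (Set.pairwiseDisjoint_filter _ _ _)
  refine (Finset.sum_le_sum fun q _ ↦ hcell q).trans_eq ?_
  rw [Finset.sum_add_distrib, ← Finset.mul_sum, Finset.sum_fiberwise, Finset.sum_fiberwise,
    cellwiseMatchingCost, cellDiscrepancy]

theorem cellwiseMatchingCost_zero_le_of_nested {Q : ℕ → Type*} [∀ k, Fintype (Q k)]
    [∀ k, DecidableEq (Q k)] {c : ι × κ → ℝ} {f : ∀ k, ι → Q k} {g : ∀ k, κ → Q k}
    {parent : ∀ k, Q (k + 1) → Q k} (hf : ∀ k, f k = parent k ∘ f (k + 1))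
    (hg : ∀ k, g k = parent k ∘ g (k + 1)) {D : ℕ → ℝ} (hD₀ : ∀ k, 0 ≤ D k)
    (hD : ∀ k i j, f k i = g k j → c (i, j) ≤ D k) (K : ℕ) :
    cellwiseMatchingCost c (f 0) (g 0) ≤ cellwiseMatchingCost c (f K) (g K) +
      ∑ k ∈ Finset.range K, D k / 2 * cellDiscrepancy (f (k + 1)) (g (k + 1)) := by
  induction K with
  | zero => simp
  | succ K ih =>
    have hrefine : cellwiseMatchingCost c (f K) (g K) ≤ cellwiseMatchingCost c (f (K + 1))
        (g (K + 1)) + D K / 2 * cellDiscrepancy (f (K + 1)) (g (K + 1)) := by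
      rw [hf K, hg K]
      refine cellwiseMatchingCost_comp_le (hD₀ K) fun i j hij ↦ hD K i j ?_
      rwa [hf K, hg K]
    rw [Finset.sum_range_succ]
    linarith

end LabelledCells

section MatchingsAsEmbeddings

variable {ι κ : Type*} {A : Finset ι} {B : Finset κ}

theorem exists_isMaximumMatching_of_embeddings {σ : Fin (min A.card B.card) ↪ ι}
    {τ : Fin (min A.card B.card) ↪ κ} (hσ : ∀ i, σ i ∈ A) (hτ : ∀ i, τ i ∈ B) (c : ι × κ → ℝ) :
    ∃ P, IsMaximumMatching A B P ∧ ∑ p ∈ P, c p = ∑ i, c (σ i, τ i) := by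
  classical
  have hinj : Function.Injective fun i ↦ (σ i, τ i) :=
    fun _ _ h ↦ σ.injective (congrArg Prod.fst h)
  refine ⟨Finset.univ.image fun i ↦ (σ i, τ i), ⟨⟨?_, ?_, ?_⟩, ?_⟩,
    Finset.sum_image hinj.injOn⟩
  · simp [Finset.subset_iff, hσ, hτ]
  · simp [Set.InjOn]
  · simp [Set.InjOn]
  · simp [Finset.card_image_of_injective _ hinj]

theorem IsMaximumMatching.exists_embeddings {P : Finset (ι × κ)} (hP : IsMaximumMatching A B P)
    (c : ι × κ → ℝ) :
    ∃ (σ : Fin (min A.card B.card) ↪ ι) (τ : Fin (min A.card B.card) ↪ κ),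
      (∀ i, σ i ∈ A) ∧ (∀ i, τ i ∈ B) ∧ ∑ p ∈ P, c p = ∑ i, c (σ i, τ i) := by
  let e := (P.equivFinOfCardEq hP.card_eq).symm
  refine ⟨⟨fun i ↦ (e i).1.1, hP.injOn_fst.injective.comp e.injective⟩,
    ⟨fun i ↦ (e i).1.2, hP.injOn_snd.injective.comp e.injective⟩,
    fun i ↦ hP.fst_mem (e i).2, fun i ↦ hP.snd_mem (e i).2, ?_⟩
  rw [← Finset.sum_coe_sort P c]
  exact (e.sum_comp fun p ↦ c p).symm

end MatchingsAsEmbeddings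

theorem LMBMon_eq_minMatchingCost {d N₁ N₂ : ℕ} (X : Fin N₁ → EuclideanSpace ℝ (Fin d))
    (Y : Fin N₂ → EuclideanSpace ℝ (Fin d)) (A : Finset (Fin N₁)) (B : Finset (Fin N₂)) :
    LMBMon X Y A B = minMatchingCost (fun p ↦ dist (X p.1) (Y p.2)) A B := by
  unfold LMBMon minMatchingCost
  congr 1
  ext s
  constructor
  · rintro ⟨σ, τ, hσ, hτ, rfl⟩
    exact exists_isMaximumMatching_of_embeddings hσ hτ fun p ↦ dist (X p.1) (Y p.2)
  · rintro ⟨P, hP, rfl⟩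
    exact hP.exists_embeddings fun p ↦ dist (X p.1) (Y p.2)

section DyadicCells

variable {d k : ℕ}

theorem dyadicLabel_lt (x : EuclideanSpace ℝ (Fin d)) (i : Fin d) :
    dyadicLabel d k x i < 2 ^ k :=
  (min_le_right _ _).trans_lt (Nat.sub_one_lt (by positivity))

theorem dyadicLabel_succ_div_two (x : EuclideanSpace ℝ (Fin d)) (i : Fin d) :
    dyadicLabel d (k + 1) x i / 2 = dyadicLabel d k x i := by
  have hfloor : ⌊(2 : ℝ) ^ (k + 1) * x i⌋₊ / 2 = ⌊(2 : ℝ) ^ k * x i⌋₊ := by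
    rw [← Nat.floor_div_ofNat]
    congr 1
    simp only [pow_succ]
    ring
  have : 0 < 2 ^ k := by positivity
  unfold dyadicLabel
  rw [← hfloor, pow_succ 2 k]
  omega

theorem mul_coord_mem_Icc_dyadicLabel {x : EuclideanSpace ℝ (Fin d)} (hx : x ∈ unitCube d)
    (i : Fin d) :
    2 ^ k * x i ∈ Set.Icc (dyadicLabel d k x i : ℝ) (dyadicLabel d k x i + 1) := by
  obtain ⟨h0, h1⟩ := hx i
  constructor
  · exact (Nat.cast_le.2 (min_le_left _ _)).trans (Nat.floor_le (by positivity))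
  · unfold dyadicLabel
    rw [Nat.cast_min, ← min_add_add_right]
    refine le_min (Nat.lt_floor_add_one _).le ?_
    rw [Nat.cast_pred (by positivity), sub_add_cancel, Nat.cast_pow, Nat.cast_ofNat]
    exact mul_le_of_le_one_right (by positivity) h1

theorem dist_le_sqrt_card_mul {ι : Type*} [Fintype ι] {x y : EuclideanSpace ℝ ι} {r : ℝ}
    (hr : 0 ≤ r) (h : ∀ i, dist (x i) (y i) ≤ r) : dist x y ≤ √(Fintype.card ι) * r := by
  rw [EuclideanSpace.dist_eq]
  calc √(∑ i, dist (x i) (y i) ^ 2) ≤ √(∑ _i : ι, r ^ 2) := by gcongr with i; exact h i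
    _ = √(Fintype.card ι) * r := by
      rw [Finset.sum_const, Finset.card_univ, nsmul_eq_mul, Real.sqrt_mul (Nat.cast_nonneg _),
        Real.sqrt_sq hr]

theorem dist_le_of_dyadicLabel_eq {x y : EuclideanSpace ℝ (Fin d)} (hx : x ∈ unitCube d)
    (hy : y ∈ unitCube d) (h : dyadicLabel d k x = dyadicLabel d k y) :
    dist x y ≤ √d / 2 ^ k := by
  have hcoord (i : Fin d) : dist (x i) (y i) ≤ (2 ^ k)⁻¹ := by
    have hscaled : |2 ^ k * x i - 2 ^ k * y i| ≤ 1 := by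
      have hyk := mul_coord_mem_Icc_dyadicLabel (k := k) hy i
      rw [← h] at hyk
      simpa [Real.dist_eq] using
        Real.dist_le_of_mem_Icc (mul_coord_mem_Icc_dyadicLabel hx i) hyk
    rw [← mul_sub, abs_mul, abs_of_pos (by positivity), ← Real.dist_eq] at hscaled
    rwa [← one_div, le_div_iff₀' (by positivity)]
  simpa [div_eq_mul_inv] using dist_le_sqrt_card_mul (by positivity) hcoord

/-- The label of the level-`k` dyadic cube containing `x`, with values in the type that indexes
these cubes. -/
noncomputable def dyadicCell (d k : ℕ) (x : EuclideanSpace ℝ (Fin d)) : Fin d → Fin (2 ^ k) :=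
  fun i ↦ ⟨dyadicLabel d k x i, dyadicLabel_lt x i⟩

/-- The label of the level-`k` dyadic cube containing the level-`(k + 1)` cube labelled `q`. -/
def dyadicParent (d k : ℕ) (q : Fin d → Fin (2 ^ (k + 1))) : Fin d → Fin (2 ^ k) :=
  fun i ↦ ⟨q i / 2, Nat.div_lt_of_lt_mul (pow_succ' 2 k ▸ (q i).isLt)⟩

theorem dyadicCell_eq_iff {x : EuclideanSpace ℝ (Fin d)} {q : Fin d → Fin (2 ^ k)} :
    dyadicCell d k x = q ↔ ∀ i, dyadicLabel d k x i = q i := by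
  simp only [funext_iff, dyadicCell, Fin.ext_iff]

theorem dyadicParent_dyadicCell (x : EuclideanSpace ℝ (Fin d)) :
    dyadicParent d k (dyadicCell d (k + 1) x) = dyadicCell d k x :=
  funext fun i ↦ Fin.ext (dyadicLabel_succ_div_two x i)

theorem dist_le_of_dyadicCell_eq {x y : EuclideanSpace ℝ (Fin d)} (hx : x ∈ unitCube d)
    (hy : y ∈ unitCube d) (h : dyadicCell d k x = dyadicCell d k y) :
    dist x y ≤ √d / 2 ^ k :=
  dist_le_of_dyadicLabel_eq hx hy (funext (dyadicCell_eq_iff.1 h))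

end DyadicCells

/-- Repeated dyadic subadditivity of the minimum bipartite matching length: `K` successive
dyadic subdivisions of `[0,1]^d` into `2^{kd}` congruent subcubes of edge `2⁻ᵏ`, `1 ≤ k ≤ K`. -/
theorem MBM_subadditive_dyadic
    (d N₁ N₂ K : ℕ) (hd : 1 ≤ d) (hK : 1 ≤ K)
    (X : Fin N₁ → EuclideanSpace ℝ (Fin d)) (Y : Fin N₂ → EuclideanSpace ℝ (Fin d))
    (hX : ∀ j, X j ∈ unitCube d) (hY : ∀ j, Y j ∈ unitCube d) :
    LMBM X Y ≤
      (∑ q : Fin d → Fin (2 ^ K),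
        LMBMon X Y
          (Finset.univ.filter fun j => ∀ i, dyadicLabel d K (X j) i = (q i : ℕ))
          (Finset.univ.filter fun j => ∀ i, dyadicLabel d K (Y j) i = (q i : ℕ))) +
      ∑ k ∈ Finset.Icc 1 K,
        Real.sqrt d / 2 ^ k *
          ∑ q : Fin d → Fin (2 ^ k),
            |((Finset.univ.filter fun j => ∀ i, dyadicLabel d k (X j) i = (q i : ℕ)).card : ℝ) -
             ((Finset.univ.filter fun j => ∀ i, dyadicLabel d k (Y j) i = (q i : ℕ)).card : ℝ)| := by
  let c : Fin N₁ × Fin N₂ → ℝ := fun p ↦ dist (X p.1) (Y p.2)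
  let f k j := dyadicCell d k (X j)
  let g k j := dyadicCell d k (Y j)
  have : Unique (Fin d → Fin (2 ^ 0)) := inferInstanceAs (Unique (Fin d → Fin 1))
  have hroot : LMBM X Y = cellwiseMatchingCost c (f 0) (g 0) := by
    rw [LMBM, LMBMon_eq_minMatchingCost, cellwiseMatchingCost_of_unique]
  have hnested := cellwiseMatchingCost_zero_le_of_nested (c := c) (f := f) (g := g)
    (parent := dyadicParent d) (D := fun k ↦ √d / 2 ^ k)
    (fun k ↦ funext fun j ↦ (dyadicParent_dyadicCell (X j)).symm)
    (fun k ↦ funext fun j ↦ (dyadicParent_dyadicCell (Y j)).symm)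
    (fun k ↦ by positivity) (fun k i j ↦ dist_le_of_dyadicCell_eq (hX i) (hY j)) K
  have hshift : ∑ k ∈ Finset.range K, √d / 2 ^ k / 2 * cellDiscrepancy (f (k + 1)) (g (k + 1)) =
      ∑ k ∈ Finset.Icc 1 K, √d / 2 ^ k * cellDiscrepancy (f k) (g k) := by
    simp only [div_div, ← pow_succ, Finset.range_eq_Ico]
    exact Finset.sum_Ico_add' (fun k ↦ √d / 2 ^ k * cellDiscrepancy (f k) (g k)) 0 K 1
  rw [hshift, ← hroot] at hnested
  simp only [LMBMon_eq_minMatchingCost, ← dyadicCell_eq_iff]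
  exact hnested
end

section
/- Let f : (0,∞) → ℝ be continuous and nonnegative, let C > 0 and α > 0, and suppose that f(m t) ≤ f(t) + C / t^{α} for every real t > 0 and every positive integer m. Then f(t) converges to a finite limit as t → ∞. -/
open Filter

/-!
Fix `a > 0`. Every large `t` is the integer multiple `⌊t / a⌋₊ * s` of a point `s = t / ⌊t / a⌋₊`
slightly to the right of `a`, so an upper bound `f (m * s) ≤ g s` for all positive integers `m`,
with `g` upper semicontinuous from the right at `a`, gives `limsup f ≤ g a`. If this holds for
`g = f + e` and all large `a`, then `limsup f - e ≤ f` near infinity, and `e → 0` forces `f` to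
converge to its limsup.
-/

open Set Topology

section NatMultiples

variable {𝕜 β : Type*} [Field 𝕜] [LinearOrder 𝕜] [IsStrictOrderedRing 𝕜] [FloorRing 𝕜]
  [TopologicalSpace 𝕜] [OrderTopology 𝕜]

theorem tendsto_div_natFloor_div_atTop {a : 𝕜} (ha : 0 < a) :
    Tendsto (fun t : 𝕜 ↦ t / ⌊t / a⌋₊) atTop (𝓝[≥] a) := by
  refine tendsto_nhdsWithin_iff.2 ⟨?_, ?_⟩
  · have hratio : Tendsto (fun t : 𝕜 ↦ (⌊t / a⌋₊ : 𝕜) / (t / a)) atTop (𝓝 1) :=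
      (tendsto_nat_floor_div_atTop (R := 𝕜)).comp (tendsto_id.atTop_div_const ha)
    have hlim : Tendsto (fun t : 𝕜 ↦ a * ((⌊t / a⌋₊ : 𝕜) / (t / a))⁻¹) atTop (𝓝 a) := by
      simpa using (hratio.inv₀ one_ne_zero).const_mul a
    refine hlim.congr fun t ↦ ?_
    rw [inv_div, ← mul_div_assoc, mul_div_cancel₀ t ha.ne']
  · filter_upwards [eventually_ge_atTop a] with t hat
    have hfloor : (0 : 𝕜) < ⌊t / a⌋₊ := Nat.cast_pos.2 (Nat.floor_pos.2 ((one_le_div ha).2 hat))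
    rw [mem_Ici, le_div_iff₀ hfloor, mul_comm, ← le_div_iff₀ ha]
    exact Nat.floor_le (div_nonneg (ha.le.trans hat) ha.le)

theorem eventually_lt_of_natCast_mul_le [Preorder β] {f g : 𝕜 → β} {a : 𝕜} {b : β} (ha : 0 < a)
    (hg : UpperSemicontinuousWithinAt g (Ici a) a)
    (hfg : ∀ᶠ s in 𝓝[≥] a, ∀ m : ℕ, 0 < m → f (m * s) ≤ g s) (hb : g a < b) :
    ∀ᶠ t in atTop, f t < b := by
  have hs := tendsto_div_natFloor_div_atTop ha
  filter_upwards [hs.eventually (hg b hb), hs.eventually hfg, eventually_ge_atTop a]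
    with t hgb hfgt hat
  have hm : 0 < ⌊t / a⌋₊ := Nat.floor_pos.2 ((one_le_div ha).2 hat)
  calc f t = f (⌊t / a⌋₊ * (t / ⌊t / a⌋₊)) := by
        rw [mul_div_cancel₀ t (Nat.cast_ne_zero.2 hm.ne')]
    _ ≤ g (t / ⌊t / a⌋₊) := hfgt _ hm
    _ < b := hgb

theorem limsup_le_of_natCast_mul_le [ConditionallyCompleteLinearOrder β] [DenselyOrdered β]
    {f g : 𝕜 → β} {a : 𝕜} (ha : 0 < a) (hf : IsCoboundedUnder (· ≤ ·) atTop f)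
    (hg : UpperSemicontinuousWithinAt g (Ici a) a)
    (hfg : ∀ᶠ s in 𝓝[≥] a, ∀ m : ℕ, 0 < m → f (m * s) ≤ g s) :
    limsup f atTop ≤ g a :=
  le_of_forall_gt_imp_ge_of_dense fun _ hb ↦
    limsup_le_of_le hf ((eventually_lt_of_natCast_mul_le ha hg hfg hb).mono fun _ ↦ le_of_lt)

theorem tendsto_of_approximate_subadditivity_general {f e : 𝕜 → ℝ}
    (hf : IsCoboundedUnder (· ≤ ·) atTop f)
    (husc : ∀ᶠ t in atTop, UpperSemicontinuousWithinAt (fun s ↦ f s + e s) (Ici t) t)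
    (hsub : ∀ᶠ t : 𝕜 in atTop, ∀ m : ℕ, 0 < m → f (m * t) ≤ f t + e t)
    (he : Tendsto e atTop (𝓝 0)) :
    Tendsto f atTop (𝓝 (limsup f atTop)) := by
  have hsub_right : ∀ᶠ t in atTop, ∀ᶠ s in 𝓝[≥] t, ∀ m : ℕ, 0 < m → f (m * s) ≤ f s + e s :=
    (eventually_forall_ge_atTop.2 hsub).mono fun t ht ↦ eventually_mem_nhdsWithin.mono ht
  have hbdd : IsBoundedUnder (· ≤ ·) atTop f := by
    obtain ⟨t, ht, husct, hsubt⟩ := ((eventually_gt_atTop 0).and (husc.and hsub_right)).exists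
    exact isBoundedUnder_of_eventually_le <|
      (eventually_lt_of_natCast_mul_le ht husct hsubt (lt_add_one _)).mono fun _ ↦ le_of_lt
  have hlimsup : ∀ᶠ t in atTop, limsup f atTop ≤ f t + e t := by
    filter_upwards [eventually_gt_atTop 0, husc, hsub_right] with t ht husct hsubt
    exact limsup_le_of_natCast_mul_le ht hf husct hsubt
  refine tendsto_order.2 ⟨fun b hb ↦ ?_, fun b hb ↦ eventually_lt_of_limsup_lt hb hbdd⟩
  filter_upwards [hlimsup, he.eventually_lt_const (sub_pos.2 hb)] with t hle hlt
  linarith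

end NatMultiples

/-- If `f : (0,∞) → ℝ` is continuous and nonnegative and satisfies
`f(mt) ≤ f(t) + C/t^α` for all `t > 0` and all positive integers `m`
(with constants `C > 0`, `α > 0`), then `f(t)` converges to a finite limit
as `t → ∞`. -/
theorem tendsto_of_approximate_subadditivity
    (f : ℝ → ℝ) (C α : ℝ) (hC : 0 < C) (hα : 0 < α)
    (hcont : ContinuousOn f (Set.Ioi 0))
    (hnonneg : ∀ t : ℝ, 0 < t → 0 ≤ f t)
    (hsub : ∀ t : ℝ, 0 < t → ∀ m : ℕ, 0 < m → f (m * t) ≤ f t + C / t ^ α) :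
    ∃ L : ℝ, Tendsto f atTop (nhds L) := by
  have hadd : ContinuousOn (fun t ↦ f t + C / t ^ α) (Ioi 0) :=
    hcont.add <| continuousOn_const.div
      (continuousOn_id.rpow_const fun t ht ↦ .inl (ne_of_gt ht))
      fun t ht ↦ (Real.rpow_pos_of_pos ht α).ne'
  have hpos : ∀ᶠ t : ℝ in atTop, 0 < t := eventually_gt_atTop 0
  exact ⟨_, tendsto_of_approximate_subadditivity_general
    (isBoundedUnder_of_eventually_ge (hpos.mono hnonneg)).isCoboundedUnder_le
    (hpos.mono fun t ht ↦
      (hadd.continuousAt (Ioi_mem_nhds ht)).upperSemicontinuousAt.upperSemicontinuousWithinAt _)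
    (hpos.mono hsub) ((tendsto_rpow_atTop hα).const_div_atTop C)⟩
end
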